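/- arXiv:1712.05731 — 2 statements merged into one kernel-verified Lean document; each statement's English description precedes it below -/
import Mathlib

section
/- Fix η > 0, m ∈ ℕ₊ and δ > 0. Let f_0, f_1, f : [0,1]^p → ℝ be bounded measurable functions satisfying ‖f − f_0‖_∞² ≤ η(m‖f − f_0‖₂² + δ²), ‖f_1 − f_0‖_∞² ≤ η(m‖f_1 − f_0‖₂² + δ²), and ‖f − f_1‖₂ ≤ ‖f_0 − f_1‖₂. Define g = (f − f_1)² − (1/16)(f_1 − f_0)². Then there is a constant C > 0, depending only on η, such that ‖g‖₂² ≤ C (m‖f_1 − f_0‖₂² + δ²) ‖f_0 − f_1‖₂² and ‖g‖_∞ ≤ C (m‖f_0 − f_1‖₂² + δ²). -/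
open MeasureTheory ProbabilityTheory Real Filter
open scoped ENNReal NNReal

noncomputable section

/-- The unit cube `[0,1]^p`. -/
def cube (p : ℕ) : Set (Fin p → ℝ) := Set.Icc 0 1

/-- Uniform distribution on `[0,1]^p`. -/
def designMeasure (p : ℕ) : Measure (Fin p → ℝ) := volume.restrict (cube p)

/-- Integrated `L²`-distance on `[0,1]^p`. -/
def l2dist (p : ℕ) (f g : (Fin p → ℝ) → ℝ) : ℝ :=
  Real.sqrt (∫ x in cube p, (f x - g x) ^ 2)

/-- Sup-norm distance on `[0,1]^p`. -/
def supdist (p : ℕ) (f g : (Fin p → ℝ) → ℝ) : ℝ :=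
  ⨆ x : cube p, |f x.1 - g x.1|

/-- `N(0,σ²)` density evaluated at `y - μ`. -/
def gpdf (σ μ y : ℝ) : ℝ := gaussianPDFReal μ (Real.toNNReal (σ ^ 2)) y

/-- Law of one observation `(x, y)`, `x ~ Unif([0,1]^p)`, `y | x ~ N(f(x), σ²)`. -/
def Pobs (p : ℕ) (σ : ℝ) (f : (Fin p → ℝ) → ℝ) : Measure ((Fin p → ℝ) × ℝ) :=
  ((designMeasure p).prod volume).withDensity fun z => ENNReal.ofReal (gpdf σ (f z.1) z.2)

/-- Law of `n` i.i.d. observations. -/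
def PobsN (p : ℕ) (σ : ℝ) (f : (Fin p → ℝ) → ℝ) (n : ℕ) :
    Measure (Fin n → (Fin p → ℝ) × ℝ) :=
  Measure.pi fun _ => Pobs p σ f

/-- Likelihood ratio `∏ᵢ p_f(xᵢ,yᵢ)/p_{f₀}(xᵢ,yᵢ)`. -/
def LR (σ : ℝ) {p n : ℕ} (f₀ f : (Fin p → ℝ) → ℝ) (D : Fin n → (Fin p → ℝ) × ℝ) : ℝ :=
  ∏ i, gpdf σ (f (D i).1) (D i).2 / gpdf σ (f₀ (D i).1) (D i).2

/-- Posterior mass of `A` given data `D`. -/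
def post (σ : ℝ) {p n : ℕ} (f₀ : (Fin p → ℝ) → ℝ) (Pi : Measure ((Fin p → ℝ) → ℝ))
    (D : Fin n → (Fin p → ℝ) × ℝ) (A : Set ((Fin p → ℝ) → ℝ)) : ℝ :=
  (∫ f in A, LR σ f₀ f D ∂Pi) / (∫ f, LR σ f₀ f D ∂Pi)

/-- Covering number of `S` by `d`-balls of radius `ε`. -/
def covN {α : Type*} (ε : ℝ) (S : Set α) (d : α → α → ℝ) : ℝ≥0∞ :=
  ⨅ (T : Finset α) (_ : ∀ f ∈ S, ∃ g ∈ T, d f g < ε), (T.card : ℝ≥0∞)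

/-- The sieve property `‖f-f₀‖∞² ≤ η (m ‖f-f₀‖₂² + δ²)`. -/
def SieveProp (p : ℕ) (f₀ : (Fin p → ℝ) → ℝ) (η : ℝ) (m : ℕ) (δ : ℝ)
    (F : Set ((Fin p → ℝ) → ℝ)) : Prop :=
  ∀ f ∈ F, supdist p f f₀ ^ 2 ≤ η * (m * l2dist p f f₀ ^ 2 + δ ^ 2)

/-- The neighborhood `B(m, ε, ω)`. -/
def klBall (p : ℕ) (f₀ : (Fin p → ℝ) → ℝ) (η' : ℝ) (m : ℕ) (ε ω : ℝ) :
    Set ((Fin p → ℝ) → ℝ) :=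
  {f | l2dist p f f₀ < ε ∧ supdist p f f₀ ^ 2 ≤ η' * (m * l2dist p f f₀ ^ 2 + ω ^ 2)}

theorem aux_int (p : ℕ) (f g : (Fin p → ℝ) → ℝ) (hf : Measurable f) (hg : Measurable g)
    (bf : ∃ B : ℝ, ∀ x, |f x| ≤ B) (bg : ∃ B : ℝ, ∀ x, |g x| ≤ B) :
    IntegrableOn (fun x => (f x - g x) ^ 2) (cube p) := by
  obtain ⟨B, hB⟩ := bf
  obtain ⟨B', hB'⟩ := bg
  have hfin : volume (cube p) < ⊤ := isCompact_Icc.measure_lt_top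
  refine Measure.integrableOn_of_bounded (M := (B + B') ^ 2) hfin.ne
    ((hf.sub hg).pow_const 2).aestronglyMeasurable (Eventually.of_forall fun x => ?_)
  rw [Real.norm_eq_abs, abs_pow]
  have h : |f x - g x| ≤ B + B' := (abs_sub _ _).trans (add_le_add (hB x) (hB' x))
  exact pow_le_pow_left₀ (abs_nonneg _) h 2

theorem aux_l2 (p : ℕ) (f g : (Fin p → ℝ) → ℝ) :
    l2dist p f g ^ 2 = ∫ x in cube p, (f x - g x) ^ 2 := by
  unfold l2dist
  exact Real.sq_sqrt (integral_nonneg fun x => sq_nonneg _)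

theorem aux_sup (p : ℕ) (f g : (Fin p → ℝ) → ℝ)
    (bf : ∃ B : ℝ, ∀ x, |f x| ≤ B) (bg : ∃ B : ℝ, ∀ x, |g x| ≤ B) (x : cube p) :
    (f x.1 - g x.1) ^ 2 ≤ supdist p f g ^ 2 := by
  obtain ⟨B, hB⟩ := bf
  obtain ⟨B', hB'⟩ := bg
  have h : |f x.1 - g x.1| ≤ supdist p f g := by
    refine le_ciSup (f := fun x : cube p => |f x.1 - g x.1|) ⟨B + B', ?_⟩ x
    rintro _ ⟨y, rfl⟩
    exact (abs_sub _ _).trans (add_le_add (hB _) (hB' _))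
  rw [← sq_abs]
  exact pow_le_pow_left₀ (abs_nonneg _) h 2

/-- norm bounds for the auxiliary function
`g = (f - f₁)² - (1/16)(f₁ - f₀)²` in the type-II error analysis. -/
theorem statement16 (η : ℝ) (hη : 0 < η) :
    ∃ C : ℝ, 0 < C ∧
      ∀ (p m : ℕ) (δ : ℝ), 0 < m → 0 < δ →
        ∀ f₀ f₁ f : (Fin p → ℝ) → ℝ,
          Measurable f₀ → Measurable f₁ → Measurable f →
          (∃ B : ℝ, ∀ x, |f₀ x| ≤ B) → (∃ B : ℝ, ∀ x, |f₁ x| ≤ B) →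
          (∃ B : ℝ, ∀ x, |f x| ≤ B) →
          supdist p f f₀ ^ 2 ≤ η * ((m : ℝ) * l2dist p f f₀ ^ 2 + δ ^ 2) →
          supdist p f₁ f₀ ^ 2 ≤ η * ((m : ℝ) * l2dist p f₁ f₀ ^ 2 + δ ^ 2) →
          l2dist p f f₁ ≤ l2dist p f₀ f₁ →
          (Real.sqrt (∫ x in cube p,
              ((f x - f₁ x) ^ 2 - (1 / 16) * (f₁ x - f₀ x) ^ 2) ^ 2) ^ 2 ≤
            C * ((m : ℝ) * l2dist p f₁ f₀ ^ 2 + δ ^ 2) * l2dist p f₀ f₁ ^ 2) ∧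
          (⨆ x : cube p, |(f x.1 - f₁ x.1) ^ 2 - (1 / 16) * (f₁ x.1 - f₀ x.1) ^ 2|) ≤
            C * ((m : ℝ) * l2dist p f₀ f₁ ^ 2 + δ ^ 2) := by
  refine ⟨20 * η, by positivity, ?_⟩
  intro p m δ hm hδ f₀ f₁ f m0 m1 mf b0 b1 bf hs hs1 hl
  have i0 := aux_int p f f₀ mf m0 bf b0
  have i1 := aux_int p f f₁ mf m1 bf b1
  have i2 := aux_int p f₁ f₀ m1 m0 b1 b0
  have hmeas : MeasurableSet (cube p) := measurableSet_Icc
  have hsym : l2dist p f₀ f₁ = l2dist p f₁ f₀ := by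
    unfold l2dist
    congr 1
    exact integral_congr_ae (Eventually.of_forall fun x => by ring)
  rw [hsym] at hl ⊢
  have hl2 : l2dist p f f₁ ^ 2 ≤ l2dist p f₁ f₀ ^ 2 :=
    pow_le_pow_left₀ (Real.sqrt_nonneg _) hl 2
  have htri : l2dist p f f₀ ^ 2 ≤ 2 * l2dist p f f₁ ^ 2 + 2 * l2dist p f₁ f₀ ^ 2 := by
    rw [aux_l2, aux_l2, aux_l2, ← integral_const_mul, ← integral_const_mul,
      ← integral_add (i1.const_mul 2) (i2.const_mul 2)]
    refine integral_mono i0 ((i1.const_mul 2).add (i2.const_mul 2)) fun x => ?_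
    simp only
    nlinarith [sq_nonneg ((f x - f₁ x) - (f₁ x - f₀ x))]
  set A := l2dist p f₁ f₀ ^ 2 with hA
  have hA0 : 0 ≤ A := sq_nonneg _
  have hm0 : (0 : ℝ) ≤ m := Nat.cast_nonneg m
  set D := (m : ℝ) * A + δ ^ 2 with hD
  have hD0 : 0 ≤ D := by positivity
  have hηD : 0 ≤ η * D := by positivity
  have hs' : supdist p f f₀ ^ 2 ≤ 4 * (η * D) := by
    refine hs.trans ?_
    have h1 : (m : ℝ) * l2dist p f f₀ ^ 2 ≤ m * (4 * A) :=
      mul_le_mul_of_nonneg_left (by linarith) hm0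
    have h2 : (m : ℝ) * l2dist p f f₀ ^ 2 + δ ^ 2 ≤ 4 * D := by
      rw [hD]; nlinarith [sq_nonneg δ]
    calc _ ≤ η * (4 * D) := mul_le_mul_of_nonneg_left h2 hη.le
      _ = _ := by ring
  have k1 : ∀ x ∈ cube p, (f x - f₁ x) ^ 2 ≤ 10 * (η * D) := by
    intro x hx
    have h1 := aux_sup p f f₀ bf b0 ⟨x, hx⟩
    have h2 := aux_sup p f₁ f₀ b1 b0 ⟨x, hx⟩
    simp only at h1 h2
    nlinarith [sq_nonneg ((f x - f₀ x) + (f₁ x - f₀ x))]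
  have k2 : ∀ x ∈ cube p, (f₁ x - f₀ x) ^ 2 ≤ η * D := fun x hx =>
    (aux_sup p f₁ f₀ b1 b0 ⟨x, hx⟩).trans hs1
  have kg : ∀ x ∈ cube p,
      |(f x - f₁ x) ^ 2 - (1 / 16) * (f₁ x - f₀ x) ^ 2| ≤ 10 * (η * D) := by
    intro x hx
    have h1 := k1 x hx
    have h2 := k2 x hx
    rw [abs_le]
    constructor <;> nlinarith [sq_nonneg (f x - f₁ x), sq_nonneg (f₁ x - f₀ x)]
  constructor
  · rw [Real.sq_sqrt (integral_nonneg fun x => sq_nonneg _)]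
    have hbd : IntegrableOn (fun x => 10 * (η * D) *
        ((f x - f₁ x) ^ 2 + (1 / 16) * (f₁ x - f₀ x) ^ 2)) (cube p) :=
      (i1.add (i2.const_mul (1 / 16))).const_mul _
    have hle : (∫ x in cube p, ((f x - f₁ x) ^ 2 - (1 / 16) * (f₁ x - f₀ x) ^ 2) ^ 2) ≤
        ∫ x in cube p, 10 * (η * D) *
          ((f x - f₁ x) ^ 2 + (1 / 16) * (f₁ x - f₀ x) ^ 2) := by
      refine integral_mono_of_nonneg (Eventually.of_forall fun x => sq_nonneg _) hbd ?_
      filter_upwards [ae_restrict_mem hmeas] with x hx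
      have h1 := kg x hx
      have h2 : |(f x - f₁ x) ^ 2 - (1 / 16) * (f₁ x - f₀ x) ^ 2| ≤
          (f x - f₁ x) ^ 2 + (1 / 16) * (f₁ x - f₀ x) ^ 2 := by
        rw [abs_le]
        constructor <;> nlinarith [sq_nonneg (f x - f₁ x), sq_nonneg (f₁ x - f₀ x)]
      rw [← sq_abs, sq]
      exact mul_le_mul h1 h2 (abs_nonneg _) (by positivity)
    refine hle.trans ?_
    rw [integral_const_mul, integral_add i1 (i2.const_mul (1 / 16)), integral_const_mul,
      ← aux_l2, ← aux_l2, ← hA]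
    nlinarith [mul_nonneg hηD hA0, mul_le_mul_of_nonneg_left hl2 hηD]
  · refine Real.iSup_le (fun x => (kg x.1 x.2).trans ?_) (by positivity)
    linarith
end
end

section
/- Fix η > 0, m ∈ ℕ₊ and δ > 0. Let f_0, f_1, f : [0,1]^p → ℝ be bounded measurable functions satisfying ‖f − f_0‖_∞² ≤ η(m‖f − f_0‖₂² + δ²), ‖f_1 − f_0‖_∞² ≤ η(m‖f_1 − f_0‖₂² + δ²), ‖f − f_1‖₂² ≤ ‖f_1 − f_0‖₂²/32, and ‖f_1 − f_0‖₂ > 0. Let x_1,…,x_n be i.i.d. uniform on [0,1]^p. Then there exists a constant C̃ > 0, depending only on η, such that P( P_n(f − f_1)² > (1/16) P_n(f_1 − f_0)² ) ≤ exp( −C̃ n ‖f_1 − f_0‖₂² / (m‖f_1 − f_0‖₂² + δ²) ), where P_n h = n^{−1} Σ_{i=1}^n h(x_i). -/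
open MeasureTheory ProbabilityTheory Real Filter
open scoped ENNReal NNReal

noncomputable section

lemma chernoff_aux {E : Type*} [MeasurableSpace E] (μ : Measure E) [IsProbabilityMeasure μ]
    (U V : E → ℝ) (hU : Measurable U) (hV : Measurable V) (M a : ℝ) (hM : 0 < M)
    (hU0 : ∀ x, 0 ≤ U x) (hV0 : ∀ x, 0 ≤ V x)
    (hUM : ∀ᵐ x ∂μ, U x ≤ M) (hVM : ∀ᵐ x ∂μ, V x ≤ M)
    (hUa : ∫ x, U x ∂μ ≤ a / 32) (hVa : ∫ x, V x ∂μ = a) (n : ℕ) :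
    Measure.pi (fun _ : Fin n => μ) {X | (1 / 16 : ℝ) * ∑ i, V (X i) < ∑ i, U (X i)} ≤
      ENNReal.ofReal (Real.exp (-(n * (a / (256 * M))))) := by
  have ha : 0 ≤ a := hVa ▸ integral_nonneg hV0
  set φ : E → ℝ := fun x => Real.exp ((U x - V x / 16) / (2 * M)) with hφ
  have hφm : Measurable φ := by fun_prop
  have iU : Integrable U μ := by
    refine Integrable.of_bound hU.aestronglyMeasurable M ?_
    filter_upwards [hUM] with x hx
    rw [Real.norm_eq_abs, abs_of_nonneg (hU0 x)]; exact hx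
  have iV : Integrable V μ := by
    refine Integrable.of_bound hV.aestronglyMeasurable M ?_
    filter_upwards [hVM] with x hx
    rw [Real.norm_eq_abs, abs_of_nonneg (hV0 x)]; exact hx
  have key : ∀ᵐ x ∂μ, φ x ≤ 1 + (3 / (4 * M) * U x - 31 / (1024 * M) * V x) := by
    filter_upwards [hUM, hVM] with x h1 h2
    have h3 := hU0 x
    have h4 := hV0 x
    set y := (U x - V x / 16) / (2 * M) with hy
    have hyM : y * (2 * M) = U x - V x / 16 := by rw [hy]; field_simp
    have hy1 : |y| ≤ 1 := by
      rw [hy, abs_div, abs_of_pos (by positivity : 0 < 2 * M), div_le_one (by positivity), abs_le]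
      constructor <;> linarith
    have h5 := (abs_le.1 (Real.abs_exp_sub_one_sub_id_le hy1)).2
    have h6 : y + y ^ 2 ≤ 3 / (4 * M) * U x - 31 / (1024 * M) * V x := by
      have e : y + y ^ 2 = ((U x - V x / 16) * (2 * M) + (U x - V x / 16) ^ 2) / (4 * M ^ 2) := by
        rw [hy]; field_simp; ring
      have e2 : 3 / (4 * M) * U x - 31 / (1024 * M) * V x
          = ((3 * U x - 31 / 256 * V x) * M) / (4 * M ^ 2) := by
        field_simp; ring
      rw [e, e2]
      gcongr
      nlinarith [mul_nonneg h3 (sub_nonneg.2 h1), mul_nonneg h4 (sub_nonneg.2 h2),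
        mul_nonneg h3 h4]
    change Real.exp y ≤ _
    linarith
  have iR : Integrable (fun x => 1 + (3 / (4 * M) * U x - 31 / (1024 * M) * V x)) μ :=
    (integrable_const _).add ((iU.const_mul _).sub (iV.const_mul _))
  have iφ : Integrable φ μ := by
    refine iR.mono' hφm.aestronglyMeasurable ?_
    filter_upwards [key] with x hx
    rwa [Real.norm_eq_abs, abs_of_pos (Real.exp_pos _)]
  have hint : ∫ x, φ x ∂μ ≤ Real.exp (-(a / (256 * M))) := by
    calc ∫ x, φ x ∂μ ≤ ∫ x, (1 + (3 / (4 * M) * U x - 31 / (1024 * M) * V x)) ∂μ :=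
          integral_mono_ae iφ iR key
      _ = 1 + (3 / (4 * M) * ∫ x, U x ∂μ - 31 / (1024 * M) * a) := by
          have i3 : Integrable (fun x => 3 / (4 * M) * U x - 31 / (1024 * M) * V x) μ :=
            (iU.const_mul _).sub (iV.const_mul _)
          rw [integral_add (integrable_const _) i3,
            integral_sub (iU.const_mul _) (iV.const_mul _), integral_const_mul,
            integral_const_mul, hVa]
          simp
      _ ≤ 1 + (3 / (4 * M) * (a / 32) - 31 / (1024 * M) * a) := by gcongr
      _ ≤ -(a / (256 * M)) + 1 := by
          have : 3 / (4 * M) * (a / 32) - 31 / (1024 * M) * a = - (a / (256 * M)) * (7 / 4) := by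
            field_simp; ring
          have h0 : 0 ≤ a / (256 * M) := by positivity
          linarith
      _ ≤ _ := Real.add_one_le_exp _
  have iP : Integrable (fun X : Fin n → E => ∏ i, φ (X i)) (Measure.pi (fun _ : Fin n => μ)) :=
    Integrable.fintype_prod (f := fun _ : Fin n => φ) (fun _ => iφ)
  have hmk := mul_meas_ge_le_integral_of_nonneg (μ := Measure.pi (fun _ : Fin n => μ))
    (f := fun X : Fin n → E => ∏ i, φ (X i))
    (Eventually.of_forall fun X => Finset.prod_nonneg fun i _ => (Real.exp_pos _).le) iP 1
  rw [integral_fintype_prod_eq_pow, one_mul, Fintype.card_fin] at hmk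
  have hsub : {X : Fin n → E | (1 / 16 : ℝ) * ∑ i, V (X i) < ∑ i, U (X i)} ⊆
      {X | 1 ≤ ∏ i, φ (X i)} := by
    intro X hX
    simp only [Set.mem_ofPred_eq] at hX ⊢
    simp only [hφ]
    rw [← Real.exp_sum, ← Finset.sum_div, Finset.sum_sub_distrib, ← Finset.sum_div]
    apply Real.one_le_exp
    apply div_nonneg _ (by positivity)
    linarith
  refine (measure_mono hsub).trans ?_
  rw [ENNReal.le_ofReal_iff_toReal_le (measure_ne_top _ _) (Real.exp_pos _).le]
  refine hmk.trans ?_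
  rw [← mul_neg, Real.exp_nat_mul]
  gcongr

instance designMeasure_prob (p : ℕ) : IsProbabilityMeasure (designMeasure p) := by
  constructor
  rw [designMeasure, Measure.restrict_apply_univ, cube, Real.volume_Icc_pi]
  simp

lemma l2dist_sq (p : ℕ) (f g : (Fin p → ℝ) → ℝ) :
    l2dist p f g ^ 2 = ∫ x, (f x - g x) ^ 2 ∂(designMeasure p) := by
  rw [l2dist, Real.sq_sqrt (integral_nonneg fun x => sq_nonneg _)]
  rfl

lemma sq_le_supdist (p : ℕ) (f g : (Fin p → ℝ) → ℝ) (hf : ∃ B : ℝ, ∀ x, |f x| ≤ B)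
    (hg : ∃ B : ℝ, ∀ x, |g x| ≤ B) (x : Fin p → ℝ) (hx : x ∈ cube p) :
    (f x - g x) ^ 2 ≤ supdist p f g ^ 2 := by
  obtain ⟨A, hA⟩ := hf
  obtain ⟨B, hB⟩ := hg
  rw [← sq_abs (f x - g x)]
  have hb : BddAbove (Set.range fun x : cube p => |f x.1 - g x.1|) := by
    refine ⟨A + B, ?_⟩
    rintro _ ⟨y, rfl⟩
    exact (abs_sub _ _).trans (add_le_add (hA _) (hB _))
  have : |f x - g x| ≤ supdist p f g := le_ciSup hb ⟨x, hx⟩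
  gcongr

lemma integrable_sq_sub (p : ℕ) (f g : (Fin p → ℝ) → ℝ) (mf : Measurable f) (mg : Measurable g)
    (hf : ∃ B : ℝ, ∀ x, |f x| ≤ B) (hg : ∃ B : ℝ, ∀ x, |g x| ≤ B) :
    Integrable (fun x => (f x - g x) ^ 2) (designMeasure p) := by
  obtain ⟨A, hA⟩ := hf
  obtain ⟨B, hB⟩ := hg
  refine Integrable.of_bound (by fun_prop) ((A + B) ^ 2) (Eventually.of_forall fun x => ?_)
  rw [Real.norm_eq_abs, abs_of_nonneg (sq_nonneg _), ← sq_abs]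
  have := (abs_sub (f x) (g x)).trans (add_le_add (hA x) (hB x))
  gcongr

/-- Bernstein bound for the empirical comparison of
`Pₙ(f - f₁)²` and `Pₙ(f₁ - f₀)²`. -/
theorem statement17 (η : ℝ) (hη : 0 < η) :
    ∃ C : ℝ, 0 < C ∧
      ∀ (p n m : ℕ) (δ : ℝ), 0 < m → 0 < δ →
        ∀ f₀ f₁ f : (Fin p → ℝ) → ℝ,
          Measurable f₀ → Measurable f₁ → Measurable f →
          (∃ B : ℝ, ∀ x, |f₀ x| ≤ B) → (∃ B : ℝ, ∀ x, |f₁ x| ≤ B) →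
          (∃ B : ℝ, ∀ x, |f x| ≤ B) →
          supdist p f f₀ ^ 2 ≤ η * ((m : ℝ) * l2dist p f f₀ ^ 2 + δ ^ 2) →
          supdist p f₁ f₀ ^ 2 ≤ η * ((m : ℝ) * l2dist p f₁ f₀ ^ 2 + δ ^ 2) →
          l2dist p f f₁ ^ 2 ≤ l2dist p f₁ f₀ ^ 2 / 32 →
          0 < l2dist p f₁ f₀ →
          Measure.pi (fun _ : Fin n => designMeasure p)
              {X | (1 / 16 : ℝ) * ((1 / (n : ℝ)) * ∑ i, (f₁ (X i) - f₀ (X i)) ^ 2) <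
                (1 / (n : ℝ)) * ∑ i, (f (X i) - f₁ (X i)) ^ 2} ≤
            ENNReal.ofReal (Real.exp (-C * (n : ℝ) * l2dist p f₁ f₀ ^ 2 /
              ((m : ℝ) * l2dist p f₁ f₀ ^ 2 + δ ^ 2))) := by
  refine ⟨1 / (1792 * η), by positivity, ?_⟩
  intro p n m δ hm hδ f₀ f₁ f m0 m1 mf b0 b1 bf h0 h1 h2 hpos
  have hD : 0 < (m : ℝ) * l2dist p f₁ f₀ ^ 2 + δ ^ 2 := by positivity
  have hl : l2dist p f f₀ ^ 2 ≤ 33 / 16 * l2dist p f₁ f₀ ^ 2 := by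
    have : l2dist p f f₀ ^ 2 ≤ 2 * l2dist p f f₁ ^ 2 + 2 * l2dist p f₁ f₀ ^ 2 := by
      simp only [l2dist_sq]
      have i1 := (integrable_sq_sub p f f₁ mf m1 bf b1).const_mul 2
      have i2 := (integrable_sq_sub p f₁ f₀ m1 m0 b1 b0).const_mul 2
      rw [← integral_const_mul, ← integral_const_mul, ← integral_add i1 i2]
      refine integral_mono (integrable_sq_sub p f f₀ mf m0 bf b0) (i1.add i2) fun x => ?_
      simp only
      nlinarith [sq_nonneg (f x - f₁ x - (f₁ x - f₀ x))]
    linarith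
  set a := l2dist p f₁ f₀ ^ 2 with ha
  set D := (m : ℝ) * a + δ ^ 2 with hDdef
  have hηD : 0 < η * D := by positivity
  have h0' : supdist p f f₀ ^ 2 ≤ 33 / 16 * (η * D) := by
    refine h0.trans ?_
    have : (m : ℝ) * l2dist p f f₀ ^ 2 ≤ m * (33 / 16 * a) := by gcongr
    have h3 : (m : ℝ) * l2dist p f f₀ ^ 2 + δ ^ 2 ≤ 33 / 16 * D := by
      rw [hDdef]; nlinarith [sq_nonneg δ]
    calc _ ≤ η * (33 / 16 * D) := by gcongr
      _ = _ := by ring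
  have hcube : ∀ᵐ x ∂(designMeasure p), x ∈ cube p :=
    ae_restrict_mem measurableSet_Icc
  have main := chernoff_aux (designMeasure p) (fun x => (f x - f₁ x) ^ 2)
    (fun x => (f₁ x - f₀ x) ^ 2) (by fun_prop) (by fun_prop) (7 * (η * D)) a (by positivity)
    (fun x => sq_nonneg _) (fun x => sq_nonneg _)
    (by
      filter_upwards [hcube] with x hx
      have e1 := sq_le_supdist p f f₀ bf b0 x hx
      have e2 := sq_le_supdist p f₁ f₀ b1 b0 x hx
      nlinarith [sq_nonneg (f x - f₀ x + (f₁ x - f₀ x))])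
    (by
      filter_upwards [hcube] with x hx
      have e2 := sq_le_supdist p f₁ f₀ b1 b0 x hx
      linarith)
    (by rw [← l2dist_sq]; exact h2) (by rw [← l2dist_sq]) n
  refine (measure_mono ?_).trans (main.trans (le_of_eq ?_))
  · intro X hX
    simp only [Set.mem_ofPred_eq] at hX ⊢
    have hn : (0 : ℝ) ≤ 1 / (n : ℝ) := by positivity
    rw [mul_left_comm] at hX
    exact lt_of_mul_lt_mul_left hX hn
  · congr 2
    field_simp
    ring
end
end
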